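/- Let X be a real normed vector space with von Neumann–Jordan constant at most ε + 1. Then for all x, y, z ∈ X, |[x, z] + [y, z] − [x + y, z]| ≤ ε[(3 + 2ε)‖x + y‖² + ‖x − y‖² + 8(1 + ε)‖z‖²]. -/

import Mathlib

/-!
The failure of the parallelogram law at `(a, b)` is `‖a + b‖² + ‖a - b‖² - 2 (‖a‖² + ‖b‖²)`.
Writing `x = s + d` and `y = s - d`, so that `x + y = 2 s`, the failure of additivity
`[x, z] + [y, z] - [x + y, z]` is exactly a signed sum of the four parallelogram defects at
`(s ± z, d)` and `(s ± z, s)`. A bound on the von Neumann–Jordan constant controls each defect, and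
used once more at `(s, z)` it removes `‖s + z‖² + ‖s - z‖²` from the resulting estimate.
-/

section SeminormedAddCommGroup

variable {E : Type*} [SeminormedAddCommGroup E]

/-- The bracket `[a, b]`: in an inner product space, four times the inner product of `a` and `b`. -/
def normBracket (a b : E) : ℝ :=
  ‖a + b‖ ^ 2 - ‖a - b‖ ^ 2

/-- The amount by which the parallelogram law fails at `a`, `b`, used to measure how far
`normBracket` is from being additive. -/
def parallelogramDefect (a b : E) : ℝ :=
  ‖a + b‖ ^ 2 + ‖a - b‖ ^ 2 - 2 * (‖a‖ ^ 2 + ‖b‖ ^ 2)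

variable (E) in
/-- The von Neumann–Jordan constant of `E` is at most `M`. Only the upper estimate is recorded:
substituting `(a + b, a - b)` for `(a, b)` turns it into the lower one. Clearing the denominator
makes the notion meaningful for seminorms. -/
def VonNeumannJordanLE (M : ℝ) : Prop :=
  ∀ a b : E, ‖a + b‖ ^ 2 + ‖a - b‖ ^ 2 ≤ 2 * M * (‖a‖ ^ 2 + ‖b‖ ^ 2)

theorem normBracket_add_add_normBracket_sub_sub (s d z : E) :
    normBracket (s + d) z + normBracket (s - d) z - normBracket (s + s) z =
      parallelogramDefect (s + z) d - parallelogramDefect (s - z) d -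
        (parallelogramDefect (s + z) s - parallelogramDefect (s - z) s) := by
  simp only [normBracket, parallelogramDefect, add_right_comm s z, add_sub_right_comm s z,
    sub_add_eq_add_sub s z, sub_right_comm s z, sub_self, zero_add, zero_sub, norm_neg]
  ring

end SeminormedAddCommGroup

theorem vonNeumannJordanLE_iff_div_le {E : Type*} [NormedAddCommGroup E] {M : ℝ} :
    VonNeumannJordanLE E M ↔ ∀ a b : E, ¬(a = 0 ∧ b = 0) →
      (‖a + b‖ ^ 2 + ‖a - b‖ ^ 2) / (2 * (‖a‖ ^ 2 + ‖b‖ ^ 2)) ≤ M := by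
  refine forall₂_congr fun a b ↦ ?_
  by_cases hab : a = 0 ∧ b = 0
  · simp [hab]
  · have hpos : 0 < ‖a‖ ^ 2 + ‖b‖ ^ 2 := by
      rcases not_and_or.mp hab with ha | hb <;> positivity
    rw [div_le_iff₀ (by positivity), mul_left_comm, ← mul_assoc]
    simp only [hab, not_false_eq_true, forall_const]

section NormedSpace

variable {E : Type*} [SeminormedAddCommGroup E] [NormedSpace ℝ E]

theorem norm_add_self_eq_two_mul (a : E) : ‖a + a‖ = 2 * ‖a‖ := by
  rw [← two_smul ℝ a, norm_smul, Real.norm_ofNat]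

namespace VonNeumannJordanLE

variable {M : ℝ}

theorem two_mul_le_mul (h : VonNeumannJordanLE E M) (a b : E) :
    2 * (‖a‖ ^ 2 + ‖b‖ ^ 2) ≤ M * (‖a + b‖ ^ 2 + ‖a - b‖ ^ 2) := by
  have hsub := h (a + b) (a - b)
  rw [add_add_sub_cancel, add_sub_sub_cancel, norm_add_self_eq_two_mul,
    norm_add_self_eq_two_mul] at hsub
  linarith

theorem abs_parallelogramDefect_le (h : VonNeumannJordanLE E M) (hM : 1 ≤ M) (a b : E) :
    |parallelogramDefect a b| ≤ 2 * (M - 1) * (‖a‖ ^ 2 + ‖b‖ ^ 2) := by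
  have upper := h a b
  have lower : 2 * (2 - M) * (‖a‖ ^ 2 + ‖b‖ ^ 2) ≤ ‖a + b‖ ^ 2 + ‖a - b‖ ^ 2 := by
    refine le_of_mul_le_mul_left ?_ (zero_lt_one.trans_le hM)
    calc M * (2 * (2 - M) * (‖a‖ ^ 2 + ‖b‖ ^ 2))
        = M * (2 - M) * (2 * (‖a‖ ^ 2 + ‖b‖ ^ 2)) := by ring
      _ ≤ 1 * (2 * (‖a‖ ^ 2 + ‖b‖ ^ 2)) := by
        gcongr
        linarith [sq_nonneg (M - 1)]
      _ ≤ M * (‖a + b‖ ^ 2 + ‖a - b‖ ^ 2) := by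
        rw [one_mul]
        exact h.two_mul_le_mul a b
  rw [parallelogramDefect, abs_le]
  constructor <;> linarith

theorem abs_normBracket_add_add_normBracket_sub_sub_le (h : VonNeumannJordanLE E M) (hM : 1 ≤ M)
    (s d z : E) :
    |normBracket (s + d) z + normBracket (s - d) z - normBracket (s + s) z| ≤
      4 * (M - 1) * ((2 * M + 1) * ‖s‖ ^ 2 + ‖d‖ ^ 2 + 2 * M * ‖z‖ ^ 2) := by
  have hdefect := h.abs_parallelogramDefect_le hM
  have : 0 ≤ M - 1 := sub_nonneg.mpr hM
  rw [normBracket_add_add_normBracket_sub_sub]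
  calc _ ≤ |parallelogramDefect (s + z) d| + |parallelogramDefect (s - z) d| +
        (|parallelogramDefect (s + z) s| + |parallelogramDefect (s - z) s|) :=
        (abs_sub _ _).trans (add_le_add (abs_sub _ _) (abs_sub _ _))
    _ ≤ 2 * (M - 1) * (‖s + z‖ ^ 2 + ‖d‖ ^ 2) + 2 * (M - 1) * (‖s - z‖ ^ 2 + ‖d‖ ^ 2) +
        (2 * (M - 1) * (‖s + z‖ ^ 2 + ‖s‖ ^ 2) + 2 * (M - 1) * (‖s - z‖ ^ 2 + ‖s‖ ^ 2)) := by
      gcongr <;> apply hdefect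
    _ = 4 * (M - 1) * ((‖s + z‖ ^ 2 + ‖s - z‖ ^ 2) + ‖s‖ ^ 2 + ‖d‖ ^ 2) := by ring
    _ ≤ 4 * (M - 1) * (2 * M * (‖s‖ ^ 2 + ‖z‖ ^ 2) + ‖s‖ ^ 2 + ‖d‖ ^ 2) := by
      gcongr
      exact h s z
    _ = _ := by ring

end VonNeumannJordanLE

theorem bracket_add_law_general {ε : ℝ} (hε : 0 ≤ ε) (h : VonNeumannJordanLE E (ε + 1))
    (x y z : E) :
    |normBracket x z + normBracket y z - normBracket (x + y) z| ≤
      ε * ((3 + 2 * ε) * ‖x + y‖ ^ 2 + ‖x - y‖ ^ 2 + 8 * (1 + ε) * ‖z‖ ^ 2) := by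
  obtain ⟨s, d, rfl, rfl⟩ : ∃ s d : E, x = s + d ∧ y = s - d :=
    ⟨(2⁻¹ : ℝ) • (x + y), (2⁻¹ : ℝ) • (x - y), by module, by module⟩
  rw [add_add_sub_cancel, add_sub_sub_cancel, norm_add_self_eq_two_mul, norm_add_self_eq_two_mul]
  refine (h.abs_normBracket_add_add_normBracket_sub_sub_le (by linarith) s d z).trans_eq ?_
  ring

end NormedSpace

/-- **Approximate additivity of the bracket** (Lemma 2.3). For a real normed vector
space with von Neumann–Jordan constant at most `ε + 1`, with `[a, b] = ‖a+b‖² − ‖a−b‖²`,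
`|[x, z] + [y, z] − [x + y, z]| ≤ ε[(3 + 2ε)‖x+y‖² + ‖x−y‖² + 8(1+ε)‖z‖²]`. -/
theorem bracket_add_law {X : Type*} [NormedAddCommGroup X] [NormedSpace ℝ X]
    (ε : ℝ) (hε : 0 ≤ ε)
    (hJ : ∀ a b : X, ¬(a = 0 ∧ b = 0) →
      1 / (ε + 1) ≤ (‖a + b‖ ^ 2 + ‖a - b‖ ^ 2) / (2 * (‖a‖ ^ 2 + ‖b‖ ^ 2)) ∧
      (‖a + b‖ ^ 2 + ‖a - b‖ ^ 2) / (2 * (‖a‖ ^ 2 + ‖b‖ ^ 2)) ≤ ε + 1) :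
    ∀ x y z : X,
      |(‖x + z‖ ^ 2 - ‖x - z‖ ^ 2) + (‖y + z‖ ^ 2 - ‖y - z‖ ^ 2) -
          (‖x + y + z‖ ^ 2 - ‖x + y - z‖ ^ 2)| ≤
        ε * ((3 + 2 * ε) * ‖x + y‖ ^ 2 + ‖x - y‖ ^ 2 + 8 * (1 + ε) * ‖z‖ ^ 2) :=
  bracket_add_law_general hε (vonNeumannJordanLE_iff_div_le.mpr fun a b hab ↦ (hJ a b hab).2)
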